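/- Let N ≥ 1, K ≥ 1, δ ≥ 0, let S_{n,k} ∈ ℝ be the scores of item n under basic model k, and let weights w_{n,k} ∈ ℝ satisfy Σ_{k=1}^K w_{n,k} = 1 for every n and |w_{n,k} − w_{m,k}| ≤ δ for all n, m, k. Define S^ens_n = Σ_{k=1}^K w_{n,k} S_{n,k}. Fix an index n ∈ {1,…,N} and any base vector z₀ : {m : n < m ≤ N} → ℝ, and set c_m = exp(−z₀_m) / (1 + Σ_{n<j≤N} exp(−z₀_j)) for each m > n. Then |Σ_{m=n+1}^N c_m · (Σ_{k=1}^K w_{n,k}(S_{n,k} − S_{m,k}) − (S^ens_n − S^ens_m))| ≤ δ · max_{1≤m≤N} Σ_{k=1}^K |S_{m,k}|. -/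

import Mathlib

/-!
Subtracting the ensemble score difference cancels the score of item `n`: the deviation at `m` is
`∑ₖ (w_{m,k} − w_{n,k}) S_{m,k}`. It is at most `δ ∑ₖ |S_{m,k}|`, and the coefficients `cₘ`
average these deviations with total mass below `1`.
-/

section Hoelder

variable {ι R : Type*} [Ring R] [LinearOrder R] [IsOrderedRing R]

theorem abs_sum_mul_le_mul_sum_abs {s : Finset ι} {f g : ι → R} {M : R}
    (hf : ∀ i ∈ s, |f i| ≤ M) : |∑ i ∈ s, f i * g i| ≤ M * ∑ i ∈ s, |g i| :=
  calc |∑ i ∈ s, f i * g i|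
    _ ≤ ∑ i ∈ s, |f i * g i| := Finset.abs_sum_le_sum_abs _ _
    _ = ∑ i ∈ s, |f i| * |g i| := by simp only [abs_mul]
    _ ≤ ∑ i ∈ s, M * |g i| := by
        gcongr with i hi
        exact hf i hi
    _ = M * ∑ i ∈ s, |g i| := (Finset.mul_sum _ _ _).symm

end Hoelder

section PseudoSigmoid

variable {ι : Type*}

/-- The coefficient `cₘ`: the absolute value of the `m`-th partial derivative at `z` of the
logarithm pseudo-sigmoid function `z ↦ log (1 + ∑ j ∈ T, exp (-z j))`, for `m ∈ T`. Indexing `z`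
by all of `ι` avoids coercions from the subtype `T`. -/
noncomputable def pseudoSigmoidCoeff (T : Finset ι) (z : ι → ℝ) (m : ι) : ℝ :=
  Real.exp (-z m) / (1 + ∑ j ∈ T, Real.exp (-z j))

theorem pseudoSigmoidCoeff_nonneg (T : Finset ι) (z : ι → ℝ) (m : ι) :
    0 ≤ pseudoSigmoidCoeff T z m := by
  unfold pseudoSigmoidCoeff
  positivity

theorem sum_pseudoSigmoidCoeff_lt_one (T : Finset ι) (z : ι → ℝ) :
    ∑ m ∈ T, pseudoSigmoidCoeff T z m < 1 := by
  simp only [pseudoSigmoidCoeff, ← Finset.sum_div]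
  rw [div_lt_one (by positivity)]
  exact lt_one_add _

theorem abs_sum_pseudoSigmoidCoeff_mul_le {T : Finset ι} (z : ι → ℝ) {x : ι → ℝ} {B : ℝ}
    (hB : 0 ≤ B) (hx : ∀ m ∈ T, |x m| ≤ B) :
    |∑ m ∈ T, pseudoSigmoidCoeff T z m * x m| ≤ B :=
  calc |∑ m ∈ T, pseudoSigmoidCoeff T z m * x m|
    _ = |∑ m ∈ T, x m * pseudoSigmoidCoeff T z m| := by simp only [mul_comm]
    _ ≤ B * ∑ m ∈ T, |pseudoSigmoidCoeff T z m| := abs_sum_mul_le_mul_sum_abs hx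
    _ = B * ∑ m ∈ T, pseudoSigmoidCoeff T z m := by
        simp only [abs_of_nonneg (pseudoSigmoidCoeff_nonneg T z _)]
    _ ≤ B := mul_le_of_le_one_right hB (sum_pseudoSigmoidCoeff_lt_one T z).le

end PseudoSigmoid

section Ensemble

variable {ι κ R : Type*} [Fintype κ]

/-- The ensemble score `S^ens_n = ∑ₖ w_{n,k} S_{n,k}` of item `n`, each item carrying its own
weights over the basic models `κ`. -/
def ensembleScore [NonUnitalNonAssocSemiring R] (w S : ι → κ → R) (n : ι) : R :=
  ∑ k, w n k * S n k

theorem sum_mul_sub_sub_ensembleScore_sub [NonUnitalNonAssocRing R] (w S : ι → κ → R) (n m : ι) :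
    ∑ k, w n k * (S n k - S m k) - (ensembleScore w S n - ensembleScore w S m) =
      ∑ k, (w m k - w n k) * S m k := by
  simp only [ensembleScore, mul_sub, sub_mul, Finset.sum_sub_distrib]
  abel

theorem abs_sum_mul_sub_sub_ensembleScore_sub_le [Ring R] [LinearOrder R] [IsOrderedRing R]
    {w : ι → κ → R} (S : ι → κ → R) {n m : ι} {δ : R} (hw : ∀ k, |w n k - w m k| ≤ δ) :
    |∑ k, w n k * (S n k - S m k) - (ensembleScore w S n - ensembleScore w S m)| ≤
      δ * ∑ k, |S m k| := by
  rw [sum_mul_sub_sub_ensembleScore_sub]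
  exact abs_sum_mul_le_mul_sum_abs fun k _ ↦ abs_sub_comm (w n k) (w m k) ▸ hw k

theorem listwise_first_order_term_bound_general {w S : ι → κ → ℝ} {T : Finset ι} {n : ι} {δ : ℝ}
    (hδ : 0 ≤ δ) (hw : ∀ m ∈ T, ∀ k, |w n k - w m k| ≤ δ)
    (hS : BddAbove (Set.range fun m ↦ ∑ k, |S m k|)) (z₀ : ι → ℝ) :
    |∑ m ∈ T, pseudoSigmoidCoeff T z₀ m *
        (∑ k, w n k * (S n k - S m k) - (ensembleScore w S n - ensembleScore w S m))| ≤
      δ * ⨆ m, ∑ k, |S m k| := by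
  have hsup : 0 ≤ ⨆ m, ∑ k, |S m k| := Real.iSup_nonneg fun m ↦ by positivity
  refine abs_sum_pseudoSigmoidCoeff_mul_le z₀ (mul_nonneg hδ hsup) fun m hm ↦ ?_
  calc |∑ k, w n k * (S n k - S m k) - (ensembleScore w S n - ensembleScore w S m)|
    _ ≤ δ * ∑ k, |S m k| := abs_sum_mul_sub_sub_ensembleScore_sub_le S (hw m hm)
    _ ≤ δ * ⨆ m, ∑ k, |S m k| := mul_le_mul_of_nonneg_left (le_ciSup hS m) hδ

end Ensemble

/-- Bound on the first-order term `B` in the error-ambiguity decomposition of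
the list-wise Plackett–Luce loss at position `n`: with coefficients
`cₘ = exp(−z₀ₘ)/(1 + Σ_{j > n} exp(−z₀ⱼ))`, the deviation between the weighted
basic-model score differences and the ensemble score differences is bounded by
`δ` times the largest total absolute score of an item. -/
theorem listwise_first_order_term_bound
    (N K : ℕ) (hN : 1 ≤ N) (hK : 1 ≤ K) (δ : ℝ) (hδ : 0 ≤ δ)
    (S : Fin N → Fin K → ℝ) (w : Fin N → Fin K → ℝ)
    (hsum : ∀ n, ∑ k, w n k = 1)
    (hδw : ∀ n m k, |w n k - w m k| ≤ δ)
    (Sens : Fin N → ℝ) (hSens : ∀ n, Sens n = ∑ k, w n k * S n k)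
    (n : Fin N) (z₀ : Fin N → ℝ) (c : Fin N → ℝ)
    (hc : ∀ m, c m = Real.exp (-(z₀ m)) /
      (1 + ∑ j ∈ Finset.univ.filter (fun j => n < j), Real.exp (-(z₀ j)))) :
    |∑ m ∈ Finset.univ.filter (fun m => n < m),
        c m * ((∑ k, w n k * (S n k - S m k)) - (Sens n - Sens m))| ≤
      δ * ⨆ m, ∑ k, |S m k| := by
  obtain rfl : Sens = ensembleScore w S := funext hSens
  obtain rfl : c = pseudoSigmoidCoeff {j | n < j} z₀ := funext hc
  exact listwise_first_order_term_bound_general hδ (fun m _ ↦ hδw n m)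
    (Set.finite_range _).bddAbove z₀
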